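/- Let 𝕡_1 and 𝕡_2 be two pomsets on the same s coordinates, encoded by partial orders ⪯_1 and ⪯_2 on [s], such that 𝕡_2 is finer than 𝕡_1 (i.e. a ⪯_1 b implies a ⪯_2 b), and let π be a labeling with k_1 = k_2 = … = k_s = t. Then every MDS (𝕡_1,π)-code 𝒞 ⊆ ℤ_m^n is an MDS (𝕡_2,π)-code. -/

import Mathlib

open scoped Classical

noncomputable section

/-- Lee weight of an element of `ZMod m`. -/
def leeWt (m : ℕ) (a : ZMod m) : ℕ := min a.val (m - a.val)

/-- Block Lee weight of the `i`-th block of `u`. -/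
def blockWt (m s : ℕ) (π : Fin s → ℕ) (u : ∀ i : Fin s, Fin (π i) → ZMod m)
    (i : Fin s) : ℕ :=
  Finset.univ.sup fun t => leeWt m (u i t)

/-- The `(𝕡,π)`-weight of `u`. -/
def pomsetWt (m s : ℕ) (P : PartialOrder (Fin s)) (π : Fin s → ℕ)
    (u : ∀ i : Fin s, Fin (π i) → ZMod m) : ℕ :=
  ∑ i : Fin s,
    if ∃ j, j ≠ i ∧ P.le i j ∧ 0 < blockWt m s π u j then m / 2
    else blockWt m s π u i

/-- The pomset block distance. -/
def pomsetDist (m s : ℕ) (P : PartialOrder (Fin s)) (π : Fin s → ℕ)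
    (u v : ∀ i : Fin s, Fin (π i) → ZMod m) : ℕ :=
  pomsetWt m s P π (u - v)

/-- An ideal of the pomset `𝕡`, given by its count function `I : [s] → {0,…,⌊m/2⌋}`. -/
def IsIdeal (m s : ℕ) (P : PartialOrder (Fin s)) (I : Fin s → ℕ) : Prop :=
  (∀ a, I a ≤ m / 2) ∧ ∀ a b, 0 < I a → P.le b a → b ≠ a → I b = m / 2

/-- An ideal has full count if every element of its root set has count `⌊m/2⌋`. -/
def FullCount (m : ℕ) {s : ℕ} (I : Fin s → ℕ) : Prop :=
  ∀ a, 0 < I a → I a = m / 2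

/-- The cardinality `|I|` of an ideal. -/
def idealCard {s : ℕ} (I : Fin s → ℕ) : ℕ := ∑ a, I a

/-- The cardinality `|I*|` of the root set of an ideal. -/
def rootCard {s : ℕ} (I : Fin s → ℕ) : ℕ :=
  (Finset.univ.filter fun a => 0 < I a).card

/-- `Σ_{i ∈ I*} k_i`. -/
def rootSum {s : ℕ} (π I : Fin s → ℕ) : ℕ :=
  ∑ a ∈ Finset.univ.filter (fun a => 0 < I a), π a

/-- The `I`-ball centered at `u`. -/
def ballI (m s : ℕ) (π : Fin s → ℕ) (I : Fin s → ℕ)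
    (u : ∀ i : Fin s, Fin (π i) → ZMod m) :
    Set (∀ i : Fin s, Fin (π i) → ZMod m) :=
  {v | ∀ i, blockWt m s π (u - v) i ≤ I i}

/-- `𝒞` is `I`-perfect: the `I`-balls centered at codewords are pairwise
disjoint and cover the whole space. -/
def IPerfect (m s : ℕ) (π : Fin s → ℕ) (I : Fin s → ℕ)
    (C : Set (∀ i : Fin s, Fin (π i) → ZMod m)) : Prop :=
  (C.Pairwise fun c c' => Disjoint (ballI m s π I c) (ballI m s π I c')) ∧
  (⋃ c ∈ C, ballI m s π I c) = Set.univ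

/-- The `r`-ball centered at `u`. -/
def ballR (m s : ℕ) (P : PartialOrder (Fin s)) (π : Fin s → ℕ) (r : ℕ)
    (u : ∀ i : Fin s, Fin (π i) → ZMod m) :
    Set (∀ i : Fin s, Fin (π i) → ZMod m) :=
  {v | pomsetDist m s P π u v ≤ r}

/-- The standard dot product on `ℤ_m^n`. -/
def dotProd (m s : ℕ) (π : Fin s → ℕ)
    (c v : ∀ i : Fin s, Fin (π i) → ZMod m) : ZMod m :=
  ∑ i, ∑ t, c i t * v i t

/-- The dual code `𝒞^⊥`. -/
def dualCode (m s : ℕ) (π : Fin s → ℕ)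
    (C : Set (∀ i : Fin s, Fin (π i) → ZMod m)) :
    Set (∀ i : Fin s, Fin (π i) → ZMod m) :=
  {v | ∀ c ∈ C, dotProd m s π c v = 0}

/-- The dual pomset, encoded by the opposite partial order. -/
def dualOrder (s : ℕ) (P : PartialOrder (Fin s)) : PartialOrder (Fin s) where
  le a b := P.le b a
  lt a b := P.lt b a
  le_refl a := P.le_refl a
  le_trans a b c h1 h2 := P.le_trans _ _ _ h2 h1
  lt_iff_le_not_ge a b := P.lt_iff_le_not_ge b a
  le_antisymm a b h1 h2 := (P.le_antisymm _ _ h1 h2).symm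

/-- The minimum `(𝕡,π)`-distance of a code. -/
def minDist (m s : ℕ) (P : PartialOrder (Fin s)) (π : Fin s → ℕ)
    (C : Set (∀ i : Fin s, Fin (π i) → ZMod m)) : ℕ :=
  sInf {r | ∃ c ∈ C, ∃ c' ∈ C, c ≠ c' ∧ r = pomsetWt m s P π (c - c')}

/-- `𝒞` is an MDS `(𝕡,π)`-code: it attains the Singleton bound
`n − ⌈log_m K⌉ ≥ max { Σ_{i∈I*} k_i : I ideal, |I*| = ⌊(d−1)/⌊m/2⌋⌋ }`. -/
def IsMDS (m s : ℕ) (P : PartialOrder (Fin s)) (π : Fin s → ℕ)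
    (C : Set (∀ i : Fin s, Fin (π i) → ZMod m)) : Prop :=
  (∀ I, IsIdeal m s P I →
      rootCard I = (minDist m s P π C - 1) / (m / 2) →
      rootSum π I ≤ (∑ i, π i) - Nat.clog m (Nat.card ↥C)) ∧
  (∃ I, IsIdeal m s P I ∧
      rootCard I = (minDist m s P π C - 1) / (m / 2) ∧
      rootSum π I = (∑ i, π i) - Nat.clog m (Nat.card ↥C))

/-- The chain pomset on `[s]`: the usual total order on `Fin s`. -/
def chainOrder (s : ℕ) : PartialOrder (Fin s) := inferInstance

/-!
If `D` is a lower set of at most `⌊(d - 1) / l⌋` coordinates, then a vector supported on `D` has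
weight at most `d - 1`, so two distinct codewords cannot agree off `D`. Deleting the blocks in `D`
is therefore injective on the code, which is the Singleton bound.

Refining the order can only turn block weights into the maximal value `l`, so the minimum distance
`d`, and with it `⌊(d - 1) / l⌋`, does not decrease. As all blocks have the same length, the
quantity bounded in the Singleton bound depends only on `⌊(d - 1) / l⌋` and does not decrease
either; being already extremal for `𝕡₁`, it is extremal for `𝕡₂`.
-/

theorem exists_isLowerSet_card_eq {α : Type*} [PartialOrder α] [Fintype α] {r : ℕ}
    (hr : r ≤ Fintype.card α) : ∃ D : Finset α, IsLowerSet (D : Set α) ∧ D.card = r := by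
  induction r with
  | zero => exact ⟨∅, by simp [isLowerSet_empty], rfl⟩
  | succ r ih =>
    obtain ⟨D, hD, hcard⟩ := ih (by omega)
    have hcompl : Dᶜ.Nonempty := by
      rw [← Finset.card_pos, Finset.card_compl]
      omega
    obtain ⟨x, hx, hmin⟩ := Finset.exists_minimal hcompl
    refine ⟨insert x D, fun a b hba ha => ?_, ?_⟩
    · rw [Finset.mem_coe, Finset.mem_insert] at ha ⊢
      rcases ha with rfl | ha
      · by_cases hb : b ∈ D
        · exact .inr hb
        · exact .inl (hba.antisymm (hmin (Finset.mem_compl.2 hb) hba))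
      · exact .inr (hD hba ha)
    · rw [Finset.card_insert_of_notMem (Finset.mem_compl.1 hx), hcard]

section Weight

variable {m s : ℕ}

theorem leeWt_le_half (a : ZMod m) : leeWt m a ≤ m / 2 := by
  unfold leeWt
  omega

theorem leeWt_pos_iff [NeZero m] {a : ZMod m} : 0 < leeWt m a ↔ a ≠ 0 := by
  have ha : a.val < m := ZMod.val_lt a
  simp [leeWt, ZMod.val_pos, ha]

variable {P P1 P2 : PartialOrder (Fin s)} {π : Fin s → ℕ}

theorem blockWt_le_half (u : ∀ i : Fin s, Fin (π i) → ZMod m) (i : Fin s) :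
    blockWt m s π u i ≤ m / 2 :=
  Finset.sup_le fun _ _ => leeWt_le_half _

theorem blockWt_pos_iff [NeZero m] {u : ∀ i : Fin s, Fin (π i) → ZMod m} {i : Fin s} :
    0 < blockWt m s π u i ↔ u i ≠ 0 := by
  simp [blockWt, Finset.lt_sup_iff, leeWt_pos_iff, Function.ne_iff]

/-- The contribution `c_i(u)` of the coordinate `i` to the weight of `u`, so that `pomsetWt` is by
definition the sum of the `coordWt`. -/
def coordWt (m s : ℕ) (P : PartialOrder (Fin s)) (π : Fin s → ℕ)
    (u : ∀ i : Fin s, Fin (π i) → ZMod m) (i : Fin s) : ℕ :=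
  if ∃ j, j ≠ i ∧ P.le i j ∧ 0 < blockWt m s π u j then m / 2 else blockWt m s π u i

theorem coordWt_le_half (u : ∀ i : Fin s, Fin (π i) → ZMod m) (i : Fin s) :
    coordWt m s P π u i ≤ m / 2 := by
  unfold coordWt
  split_ifs
  exacts [le_rfl, blockWt_le_half u i]

theorem blockWt_le_coordWt (u : ∀ i : Fin s, Fin (π i) → ZMod m) (i : Fin s) :
    blockWt m s π u i ≤ coordWt m s P π u i := by
  unfold coordWt
  split_ifs
  exacts [blockWt_le_half u i, le_rfl]

theorem coordWt_le_of_finer (hfiner : ∀ a b, P1.le a b → P2.le a b)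
    (u : ∀ i : Fin s, Fin (π i) → ZMod m) (i : Fin s) :
    coordWt m s P1 π u i ≤ coordWt m s P2 π u i := by
  by_cases h : ∃ j, j ≠ i ∧ P1.le i j ∧ 0 < blockWt m s π u j
  · obtain ⟨j, hji, hij, hj⟩ := h
    have hP2 : coordWt m s P2 π u i = m / 2 := if_pos ⟨j, hji, hfiner i j hij, hj⟩
    exact (coordWt_le_half u i).trans_eq hP2.symm
  · have hP1 : coordWt m s P1 π u i = blockWt m s π u i := if_neg h
    exact hP1.trans_le (blockWt_le_coordWt u i)

theorem coordWt_eq_zero_of_notMem {D : Set (Fin s)} (hD : @IsLowerSet (Fin s) P.toLE D)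
    {u : ∀ i : Fin s, Fin (π i) → ZMod m} (hu : ∀ i, 0 < blockWt m s π u i → i ∈ D)
    {i : Fin s} (hi : i ∉ D) : coordWt m s P π u i = 0 := by
  have hbelow : ¬∃ j, j ≠ i ∧ P.le i j ∧ 0 < blockWt m s π u j :=
    fun ⟨j, _, hij, hj⟩ => hi (hD hij (hu j hj))
  rw [coordWt, if_neg hbelow]
  exact Nat.eq_zero_of_not_pos (mt (hu i) hi)

theorem pomsetWt_le_of_finer (hfiner : ∀ a b, P1.le a b → P2.le a b)
    (u : ∀ i : Fin s, Fin (π i) → ZMod m) : pomsetWt m s P1 π u ≤ pomsetWt m s P2 π u :=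
  Finset.sum_le_sum fun i _ => coordWt_le_of_finer hfiner u i

theorem pomsetWt_pos [NeZero m] {u : ∀ i : Fin s, Fin (π i) → ZMod m} (hu : u ≠ 0) :
    0 < pomsetWt m s P π u := by
  obtain ⟨i, hi⟩ := Function.ne_iff.1 hu
  calc 0 < blockWt m s π u i := blockWt_pos_iff.2 hi
    _ ≤ coordWt m s P π u i := blockWt_le_coordWt u i
    _ ≤ pomsetWt m s P π u :=
      Finset.single_le_sum (f := coordWt m s P π u) (fun _ _ => Nat.zero_le _) (Finset.mem_univ i)

theorem pomsetWt_le_card_mul_half {D : Finset (Fin s)}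
    (hD : @IsLowerSet (Fin s) P.toLE (D : Set (Fin s)))
    {u : ∀ i : Fin s, Fin (π i) → ZMod m} (hu : ∀ i, 0 < blockWt m s π u i → i ∈ D) :
    pomsetWt m s P π u ≤ D.card * (m / 2) :=
  calc pomsetWt m s P π u = ∑ i ∈ D, coordWt m s P π u i :=
        (Finset.sum_subset (Finset.subset_univ D) fun _ _ hi =>
          coordWt_eq_zero_of_notMem hD hu hi).symm
    _ ≤ D.card * (m / 2) := Finset.sum_le_card_nsmul _ _ _ fun i _ => coordWt_le_half u i

end Weight

section MinDist

variable {m s : ℕ} {P P1 P2 : PartialOrder (Fin s)} {π : Fin s → ℕ}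
  {C : Set (∀ i : Fin s, Fin (π i) → ZMod m)}

theorem minDist_le_pomsetWt {c c' : ∀ i : Fin s, Fin (π i) → ZMod m} (hc : c ∈ C)
    (hc' : c' ∈ C) (hne : c ≠ c') : minDist m s P π C ≤ pomsetWt m s P π (c - c') :=
  Nat.sInf_le ⟨c, hc, c', hc', hne, rfl⟩

theorem exists_minDist_eq_pomsetWt (hC : C.Nontrivial) :
    ∃ c ∈ C, ∃ c' ∈ C, c ≠ c' ∧ minDist m s P π C = pomsetWt m s P π (c - c') := by
  obtain ⟨c, hc, c', hc', hne⟩ := hC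
  exact Nat.sInf_mem (s := {r | ∃ c ∈ C, ∃ c' ∈ C, c ≠ c' ∧ r = pomsetWt m s P π (c - c')})
    ⟨_, c, hc, c', hc', hne, rfl⟩

theorem minDist_pos [NeZero m] (hC : C.Nontrivial) : 0 < minDist m s P π C := by
  obtain ⟨c, -, c', -, hne, hdist⟩ := exists_minDist_eq_pomsetWt hC
  exact hdist ▸ pomsetWt_pos (sub_ne_zero.2 hne)

theorem minDist_le_mul_half (hC : C.Nontrivial) : minDist m s P π C ≤ s * (m / 2) := by
  obtain ⟨c, hc, c', hc', hne⟩ := hC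
  calc minDist m s P π C ≤ pomsetWt m s P π (c - c') := minDist_le_pomsetWt hc hc' hne
    _ ≤ (Finset.univ : Finset (Fin s)).card * (m / 2) :=
      pomsetWt_le_card_mul_half (fun _ _ _ _ => Finset.mem_coe.2 (Finset.mem_univ _))
        fun i _ => Finset.mem_univ i
    _ = s * (m / 2) := by rw [Finset.card_univ, Fintype.card_fin]

theorem minDist_le_of_finer (hfiner : ∀ a b, P1.le a b → P2.le a b) (hC : C.Nontrivial) :
    minDist m s P1 π C ≤ minDist m s P2 π C := by
  obtain ⟨c, hc, c', hc', hne, hdist⟩ := exists_minDist_eq_pomsetWt hC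
  calc minDist m s P1 π C ≤ pomsetWt m s P1 π (c - c') := minDist_le_pomsetWt hc hc' hne
    _ ≤ pomsetWt m s P2 π (c - c') := pomsetWt_le_of_finer hfiner _
    _ = minDist m s P2 π C := hdist.symm

end MinDist

section Ideal

variable {m s : ℕ} {P : PartialOrder (Fin s)} {I : Fin s → ℕ}

/-- The root set `I*` of an ideal; `rootCard` and `rootSum` are by definition its cardinality and
the sum of the labels over it. -/
def rootSet (I : Fin s → ℕ) : Finset (Fin s) :=
  Finset.univ.filter fun a => 0 < I a

theorem mem_rootSet {a : Fin s} : a ∈ rootSet I ↔ 0 < I a := by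
  simp [rootSet]

theorem IsIdeal.isLowerSet_rootSet (hI : IsIdeal m s P I) :
    @IsLowerSet (Fin s) P.toLE (rootSet I : Set (Fin s)) := by
  intro a b hba ha
  rw [Finset.mem_coe, mem_rootSet] at ha ⊢
  rcases eq_or_ne b a with rfl | hne
  · exact ha
  · rw [hI.2 a b ha hba hne]
    exact ha.trans_le (hI.1 a)

theorem exists_isIdeal_rootSet_eq (hm : 2 ≤ m) {D : Finset (Fin s)}
    (hD : @IsLowerSet (Fin s) P.toLE (D : Set (Fin s))) :
    ∃ I, IsIdeal m s P I ∧ rootSet I = D := by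
  have hroot (a : Fin s) : 0 < (if a ∈ D then m / 2 else 0) ↔ a ∈ D := by
    split_ifs with ha <;> simp [ha, hm]
  refine ⟨fun a => if a ∈ D then m / 2 else 0, ⟨fun a => ?_, fun a b ha hba _ => ?_⟩, ?_⟩
  · dsimp only
    split_ifs <;> simp
  · exact if_pos (hD hba ((hroot a).1 ha))
  · ext a
    rw [mem_rootSet, hroot]

theorem exists_isIdeal_rootCard_eq (hm : 2 ≤ m) (P : PartialOrder (Fin s)) {r : ℕ} (hr : r ≤ s) :
    ∃ I, IsIdeal m s P I ∧ rootCard I = r := by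
  obtain ⟨D, hD, hcard⟩ :=
    @exists_isLowerSet_card_eq (Fin s) P _ r (by rwa [Fintype.card_fin])
  obtain ⟨I, hI, rfl⟩ := exists_isIdeal_rootSet_eq hm hD
  exact ⟨I, hI, hcard⟩

theorem rootSum_eq_rootCard_mul {π : Fin s → ℕ} {t : ℕ} (hπ : ∀ i, π i = t) (I : Fin s → ℕ) :
    rootSum π I = rootCard I * t :=
  Finset.sum_const_nat fun i _ => hπ i

end Ideal

section Singleton

variable {m s : ℕ} {P P1 P2 : PartialOrder (Fin s)} {π : Fin s → ℕ}
  {C : Set (∀ i : Fin s, Fin (π i) → ZMod m)}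

theorem injOn_restrict_compl_of_card_le [NeZero m] {D : Finset (Fin s)}
    (hD : @IsLowerSet (Fin s) P.toLE (D : Set (Fin s)))
    (hcard : D.card ≤ (minDist m s P π C - 1) / (m / 2)) :
    C.InjOn (Finset.restrict Dᶜ) := by
  intro c hc c' hc' hagree
  by_contra hne
  have hsupp (i : Fin s) (hi : 0 < blockWt m s π (c - c') i) : i ∈ D := by
    by_contra hiD
    exact blockWt_pos_iff.1 hi (sub_eq_zero.2 (congrFun hagree ⟨i, Finset.mem_compl.2 hiD⟩))
  have hpos : 0 < minDist m s P π C := minDist_pos ⟨c, hc, c', hc', hne⟩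
  have hlt : minDist m s P π C ≤ minDist m s P π C - 1 :=
    calc minDist m s P π C ≤ pomsetWt m s P π (c - c') := minDist_le_pomsetWt hc hc' hne
      _ ≤ D.card * (m / 2) := pomsetWt_le_card_mul_half hD hsupp
      _ ≤ minDist m s P π C - 1 := Nat.mul_le_of_le_div _ _ _ hcard
  omega

theorem card_le_pow_of_injOn_restrict [NeZero m] {E : Finset (Fin s)}
    (hE : C.InjOn (Finset.restrict E)) : Nat.card C ≤ m ^ ∑ i ∈ E, π i :=
  calc Nat.card C ≤ Nat.card (∀ i : E, Fin (π i) → ZMod m) :=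
        Nat.card_le_card_of_injective _ hE.injective
    _ = ∏ i : E, m ^ π i := by simp
    _ = m ^ ∑ i ∈ E, π i := by
        rw [Finset.prod_coe_sort E fun i => m ^ π i, Finset.prod_pow_eq_pow_sum]

theorem IsIdeal.rootSum_le_sub_clog [NeZero m] {I : Fin s → ℕ} (hI : IsIdeal m s P I)
    (hcard : rootCard I ≤ (minDist m s P π C - 1) / (m / 2)) :
    rootSum π I ≤ (∑ i, π i) - Nat.clog m (Nat.card C) := by
  have hclog : Nat.clog m (Nat.card C) ≤ ∑ i ∈ (rootSet I)ᶜ, π i :=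
    Nat.clog_le_of_le_pow
      (card_le_pow_of_injOn_restrict (injOn_restrict_compl_of_card_le hI.isLowerSet_rootSet hcard))
  have hsum : rootSum π I + ∑ i ∈ (rootSet I)ᶜ, π i = ∑ i, π i :=
    Finset.sum_add_sum_compl (rootSet I) π
  omega

theorem IsMDS.of_minDist_le (hm : 2 ≤ m) {t : ℕ} (hπ : ∀ i, π i = t) (hC : C.Nontrivial)
    (hdist : minDist m s P1 π C ≤ minDist m s P2 π C) (hMDS : IsMDS m s P1 π C) :
    IsMDS m s P2 π C := by
  have : NeZero m := ⟨by omega⟩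
  obtain ⟨-, I₁, -, hcard₁, hsum₁⟩ := hMDS
  have hr : (minDist m s P2 π C - 1) / (m / 2) ≤ s :=
    Nat.div_le_of_le_mul (by
      rw [mul_comm]
      exact (Nat.sub_le _ _).trans (minDist_le_mul_half hC))
  obtain ⟨I₂, hI₂, hcard₂⟩ := exists_isIdeal_rootCard_eq hm P2 hr
  have hcard : rootCard I₁ ≤ rootCard I₂ := by
    rw [hcard₁, hcard₂]
    gcongr
  have hsum : rootSum π I₁ ≤ rootSum π I₂ := by
    rw [rootSum_eq_rootCard_mul hπ, rootSum_eq_rootCard_mul hπ]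
    gcongr
  exact ⟨fun I hI hcard => hI.rootSum_le_sub_clog hcard.le,
    I₂, hI₂, hcard₂, (hI₂.rootSum_le_sub_clog hcard₂.le).antisymm (hsum₁ ▸ hsum)⟩

end Singleton

/-- For `m = 2` and `m = 3` the Lee weight is the Hamming weight, and this is the statement for
poset block metrics. -/
theorem mds_of_finer_pomset_general {m s : ℕ} (hm : 2 ≤ m) {P1 P2 : PartialOrder (Fin s)}
    (hfiner : ∀ a b, P1.le a b → P2.le a b) {π : Fin s → ℕ} {t : ℕ} (hπ : ∀ i, π i = t)
    {C : Set (∀ i : Fin s, Fin (π i) → ZMod m)} (hC : C.Nontrivial) (hMDS : IsMDS m s P1 π C) :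
    IsMDS m s P2 π C :=
  hMDS.of_minDist_le hm hπ hC (minDist_le_of_finer hfiner hC)

/-- if `𝕡₂` is finer than `𝕡₁` and all blocks have the same dimension,
every MDS `(𝕡₁,π)`-code is an MDS `(𝕡₂,π)`-code. -/
theorem mds_of_finer_pomset
    (m s : ℕ) (hm : 4 ≤ m) (hs : 1 ≤ s)
    (P1 P2 : PartialOrder (Fin s))
    (hfiner : ∀ a b : Fin s, P1.le a b → P2.le a b)
    (π : Fin s → ℕ) (hπ : ∀ i, 0 < π i)
    (t : ℕ) (ht : ∀ i, π i = t)
    (n : ℕ) (hn : n = ∑ i, π i)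
    (C : Set (∀ i : Fin s, Fin (π i) → ZMod m)) (hK : 2 ≤ Nat.card ↥C) :
    IsMDS m s P1 π C → IsMDS m s P2 π C :=
  mds_of_finer_pomset_general (by omega) hfiner ht
    (Set.one_lt_ncard_iff_nontrivial_and_finite.1 hK).1

end
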